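/- Let (R, 𝔪, k) be a Noetherian local ring with infinite residue field, I a proper ideal of analytic spread d > 0, and let 𝔞 = (a₁,...,a_d) and 𝔟 = (b₁,...,b_d) be minimal reductions of I. Then there exist finitely many ideals J₁,...,Jᵣ with 𝔪𝔟 ⊆ Jᵢ ⊆ 𝔟 and J₁ ∪ ... ∪ Jᵣ ⊊ 𝔟, such that for b ∈ 𝔟, the ideal (a₁,...,a_{d-1}, b) is a minimal reduction of I if and only if b ∉ J₁ ∪ ... ∪ Jᵣ. -/

import Mathlib

/-- `J` is a reduction of `I`: `J ⊆ I` and `J Iⁿ = I^{n+1}` for some `n`. -/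
def IsReduction {R : Type*} [CommRing R] (J I : Ideal R) : Prop :=
  J ≤ I ∧ ∃ n : ℕ, I ^ (n + 1) = J * I ^ n

/-- `J` is a minimal reduction of `I`: a reduction minimal w.r.t. inclusion. -/
def IsMinimalReduction {R : Type*} [CommRing R] (J I : Ideal R) : Prop :=
  IsReduction J I ∧ ∀ J' : Ideal R, IsReduction J' I → J' ≤ J → J' = J

/-- The fiber (special fiber) ring `𝓕(I) = 𝓡(I)/𝔪𝓡(I) = ⊕ Iⁿ/𝔪Iⁿ` of an ideal
`I` in a local ring `(R, 𝔪)`. -/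
noncomputable def fiberRing (R : Type*) [CommRing R] [IsLocalRing R]
    (I : Ideal R) : Type _ :=
  ↥(reesAlgebra I) ⧸
    (Ideal.map (algebraMap R ↥(reesAlgebra I)) (IsLocalRing.maximalIdeal R))

noncomputable instance (R : Type*) [CommRing R] [IsLocalRing R] (I : Ideal R) :
    CommRing (fiberRing R I) :=
  inferInstanceAs (CommRing (↥(reesAlgebra I) ⧸
    (Ideal.map (algebraMap R ↥(reesAlgebra I)) (IsLocalRing.maximalIdeal R))))

/-- The analytic spread `ℓ(I) = dim 𝓕(I)`. -/
noncomputable def analyticSpread (R : Type*) [CommRing R] [IsLocalRing R]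
    (I : Ideal R) : WithBot ℕ∞ :=
  ringKrullDim (fiberRing R I)

/-!
In the Rees algebra `R[It]` let `M = (𝔪, It)`. An ideal `J ⊆ I` is a reduction of `I` iff `M` is a
minimal prime of `(𝔪, Jt)`: a prime containing `𝔪` and `Jt` contains `It` because
`I ^ (n + 1) = J * I ^ n`, and conversely some `f ∉ M` multiplies a power of `M` into `(𝔪, Jt)`; the
constant coefficient of `f` is a unit, so `I ^ (n + 1) ⊆ J * I ^ n + 𝔪 * I ^ (n + 1)` and Nakayama's
lemma applies.

Now let `K = (𝔪, a₁t, …, a_{d-1}t)`. Since `M` is minimal over `K + (a_d t)`, every prime `P` with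
`K ⊆ P ⊂ M` is one of the finitely many minimal primes of `K`, by Krull's principal ideal theorem.
Hence `(a₁, …, a_{d-1}, x)` is a reduction iff `xt` avoids each of these, and the exceptional ideals
are `J_P = {x ∈ 𝔟 | xt ∈ P}`. Each is proper in `𝔟` because `𝔟` is itself a reduction, so over an
infinite residue field their union is proper as well.

A reduction generated by `ℓ(I)` elements is minimal: a strictly smaller one would, by Nakayama's
lemma, yield a reduction `J` with fewer than `ℓ(I)` generators, but `R[It]` is finite over the
polynomial ring on the generators of `J`, so their number bounds the dimension of the fiber ring.
-/

open Polynomial IsLocalRing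

section DegreePart

variable {R : Type*} [CommRing R] {I : Ideal R}

/-- The degree-`n` part `{x | x tⁿ ∈ N}` of an `R`-submodule `N` of the Rees algebra `R[It]`,
as an ideal of `R`. Ideals of `R[It]` are fed to it through `Submodule.restrictScalars R`. -/
noncomputable def degreePart (N : Submodule R (reesAlgebra I)) (n : ℕ) : Ideal R :=
  (N.map (reesAlgebra I).val.toLinearMap).comap (monomial n)

theorem mem_degreePart {N : Submodule R (reesAlgebra I)} {n : ℕ} {x : R} :
    x ∈ degreePart N n ↔ ∃ f ∈ N, (f : R[X]) = monomial n x :=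
  Iff.rfl

theorem mem_degreePart_iff {N : Submodule R (reesAlgebra I)} {n : ℕ} {x : R} (hx : x ∈ I ^ n) :
    x ∈ degreePart N n ↔ ⟨monomial n x, reesAlgebra.monomial_mem.mpr hx⟩ ∈ N := by
  refine ⟨fun ⟨f, hf, hfx⟩ ↦ ?_, fun h ↦ ⟨_, h, rfl⟩⟩
  rwa [show f = ⟨monomial n x, _⟩ from Subtype.ext hfx] at hf

theorem degreePart_le_pow (N : Submodule R (reesAlgebra I)) (n : ℕ) : degreePart N n ≤ I ^ n := by
  rintro x ⟨f, -, hfx⟩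
  exact reesAlgebra.monomial_mem.mp (hfx ▸ f.2)

theorem degreePart_mono {N N' : Submodule R (reesAlgebra I)} (h : N ≤ N') (n : ℕ) :
    degreePart N n ≤ degreePart N' n :=
  Submodule.comap_mono (Submodule.map_mono h)

theorem degreePart_top (n : ℕ) : degreePart (⊤ : Submodule R (reesAlgebra I)) n = I ^ n :=
  le_antisymm (degreePart_le_pow _ n) fun _ hx ↦ (mem_degreePart_iff hx).mpr trivial

theorem degreePart_mul_degreePart_le (N N' : Submodule R (reesAlgebra I)) (i j : ℕ) :
    degreePart N i * degreePart N' j ≤ degreePart (N * N') (i + j) := by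
  refine Ideal.mul_le.mpr fun x hx y hy ↦ ?_
  obtain ⟨f, hf, hfx⟩ := mem_degreePart.mp hx
  obtain ⟨g, hg, hgy⟩ := mem_degreePart.mp hy
  refine mem_degreePart.mpr ⟨f * g, Submodule.mul_mem_mul hf hg, ?_⟩
  rw [MulMemClass.coe_mul, hfx, hgy, monomial_mul_monomial]

theorem degreePart_mul_pow_le (P : Ideal (reesAlgebra I)) (i j : ℕ) :
    degreePart (P.restrictScalars R) i * I ^ j ≤ degreePart (P.restrictScalars R) (i + j) := by
  have h := degreePart_mul_degreePart_le (P.restrictScalars R)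
    ((⊤ : Ideal (reesAlgebra I)).restrictScalars R) i j
  rw [← Submodule.restrictScalars_mul, Ideal.mul_top, Submodule.restrictScalars_top,
    degreePart_top] at h
  exact h

theorem pow_degreePart_one_le (P : Ideal (reesAlgebra I)) (n : ℕ) :
    degreePart (P.restrictScalars R) 1 ^ n ≤ degreePart ((P ^ n).restrictScalars R) n := by
  induction n with
  | zero => simp [Ideal.one_eq_top, degreePart_top]
  | succ n ih =>
    rw [pow_succ, pow_succ, Submodule.restrictScalars_mul]
    exact (mul_le_mul_left ih _).trans (degreePart_mul_degreePart_le _ _ n 1)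

theorem mem_of_forall_coeff_mem_degreePart {N : Submodule R (reesAlgebra I)} {f : reesAlgebra I}
    (h : ∀ n, (f : R[X]).coeff n ∈ degreePart N n) : f ∈ N := by
  have hf : (f : R[X]) ∈ N.map (reesAlgebra I).val.toLinearMap := by
    rw [(f : R[X]).as_sum_support]
    exact sum_mem fun n _ ↦ h n
  obtain ⟨g, hg, hgf⟩ := hf
  rwa [show g = f from Subtype.ext hgf] at hg

theorem mem_degreePart_one_of_pow_mem {P : Ideal (reesAlgebra I)} (hP : P.IsPrime) {x : R}
    (hx : x ∈ I) {n : ℕ} (h : x ^ n ∈ degreePart (P.restrictScalars R) n) :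
    x ∈ degreePart (P.restrictScalars R) 1 := by
  rw [mem_degreePart_iff (Ideal.pow_mem_pow hx n)] at h
  rw [mem_degreePart_iff (by rwa [pow_one])]
  refine hP.mem_of_pow_mem n ?_
  convert! h
  simp [monomial_pow]

end DegreePart

section FiberExtension

variable {R : Type*} [CommRing R] [IsLocalRing R]

/-- The ideal `(𝔪, It)` of the Rees algebra `R[It]` of an ideal `I`: the preimage of the irrelevant
ideal of the fiber ring, encoded as the elements with constant coefficient in `𝔪`. -/
noncomputable def irrelevantIdeal (I : Ideal R) : Ideal (reesAlgebra I) :=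
  (maximalIdeal R).comap (constantCoeff.comp (reesAlgebra I).val.toRingHom)

theorem mem_irrelevantIdeal {I : Ideal R} {f : reesAlgebra I} :
    f ∈ irrelevantIdeal I ↔ (f : R[X]).coeff 0 ∈ maximalIdeal R :=
  Iff.rfl

instance (I : Ideal R) : (irrelevantIdeal I).IsPrime :=
  Ideal.comap_isPrime _ _

theorem le_degreePart_irrelevantIdeal_one (I : Ideal R) :
    I ≤ degreePart ((irrelevantIdeal I).restrictScalars R) 1 := fun x hx ↦ by
  rw [mem_degreePart_iff (by rwa [pow_one])]
  simp [mem_irrelevantIdeal, coeff_monomial]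

theorem map_maximalIdeal_le_irrelevantIdeal (I : Ideal R) :
    (maximalIdeal R).map (algebraMap R (reesAlgebra I)) ≤ irrelevantIdeal I := by
  refine Ideal.map_le_iff_le_comap.mpr fun x hx ↦ ?_
  simpa [mem_irrelevantIdeal] using hx

/-- The ideal `(𝔪, Jt)` of the Rees algebra `R[It]`, the preimage of the ideal generated by the
image of `J ⊆ I` in degree one of the fiber ring `R[It] / 𝔪R[It]`. Its minimal primes decide whether
`J` is a reduction of `I`. -/
noncomputable def fiberExtension (I J : Ideal R) : Ideal (reesAlgebra I) :=
  (maximalIdeal R).map (algebraMap R (reesAlgebra I)) ⊔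
    Ideal.span {f | ∃ y ∈ J, (f : R[X]) = monomial 1 y}

variable {I J : Ideal R}

theorem fiberExtension_le_iff (hJI : J ≤ I) {P : Ideal (reesAlgebra I)} :
    fiberExtension I J ≤ P ↔ (maximalIdeal R).map (algebraMap R (reesAlgebra I)) ≤ P ∧
      J ≤ degreePart (P.restrictScalars R) 1 := by
  refine sup_le_iff.trans (and_congr_right fun _ ↦ Ideal.span_le.trans ⟨fun h y hy ↦ ?_, ?_⟩)
  · rw [mem_degreePart_iff (by simpa using hJI hy)]
    exact h ⟨y, hy, rfl⟩
  · rintro h f ⟨y, hy, hfy⟩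
    obtain ⟨g, hg, hgy⟩ := mem_degreePart.mp (h hy)
    rwa [Subtype.ext (hfy.trans hgy.symm)]

theorem irrelevantIdeal_le_of_le_degreePart_one {P : Ideal (reesAlgebra I)}
    (hm : (maximalIdeal R).map (algebraMap R (reesAlgebra I)) ≤ P)
    (hI : I ≤ degreePart (P.restrictScalars R) 1) : irrelevantIdeal I ≤ P := by
  refine fun f hf ↦ mem_of_forall_coeff_mem_degreePart (N := P.restrictScalars R) fun n ↦ ?_
  cases n with
  | zero => exact ⟨_, hm (Ideal.mem_map_of_mem _ hf), rfl⟩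
  | succ n =>
    have hpow : I ^ (n + 1) ≤ degreePart (P.restrictScalars R) (1 + n) := by
      rw [pow_succ']
      exact (Ideal.mul_mono_left hI).trans (degreePart_mul_pow_le P 1 n)
    rw [add_comm]
    exact hpow (add_comm n 1 ▸ f.2 (n + 1))

theorem fiberExtension_le_irrelevantIdeal (hJI : J ≤ I) :
    fiberExtension I J ≤ irrelevantIdeal I :=
  (fiberExtension_le_iff hJI).mpr ⟨map_maximalIdeal_le_irrelevantIdeal I,
    hJI.trans (le_degreePart_irrelevantIdeal_one I)⟩

theorem fiberExtension_span_insert {x : R} {s : Set R} (hs : Ideal.span s ≤ I) (hx : x ∈ I) :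
    fiberExtension I (Ideal.span (insert x s)) = fiberExtension I (Ideal.span s) ⊔
      Ideal.span {⟨monomial 1 x, reesAlgebra.monomial_mem.mpr (by rwa [pow_one])⟩} := by
  have hxs : Ideal.span (insert x s) ≤ I := by
    rw [Ideal.span_le] at hs ⊢
    exact Set.insert_subset hx hs
  refine eq_of_forall_ge_iff fun P ↦ ?_
  rw [sup_le_iff, fiberExtension_le_iff hxs, fiberExtension_le_iff hs, Ideal.span_insert,
    sup_le_iff, Ideal.span_singleton_le_iff_mem, Ideal.span_singleton_le_iff_mem,
    mem_degreePart_iff (by rwa [pow_one])]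
  tauto

theorem coeff_succ_mem_of_mem_fiberExtension {f : reesAlgebra I} (hf : f ∈ fiberExtension I J)
    (n : ℕ) : (f : R[X]).coeff (n + 1) ∈ J * I ^ n ⊔ maximalIdeal R * I ^ (n + 1) := by
  rw [fiberExtension, Ideal.map, ← Ideal.span_union] at hf
  induction hf using Submodule.closure_induction with
  | zero => simp
  | add f g _ _ ihf ihg => simpa using add_mem ihf ihg
  | smul_mem g f hf =>
    rcases hf with ⟨m, hm, rfl⟩ | ⟨y, hy, hfy⟩
    · refine Ideal.mem_sup_right ?_
      simpa [mul_comm] using Ideal.mul_mem_mul hm (g.2 (n + 1))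
    · refine Ideal.mem_sup_left ?_
      simpa [hfy, coeff_mul_monomial, mul_comm] using Ideal.mul_mem_mul hy (g.2 n)

end FiberExtension

section Reduction

variable {R : Type*} [CommRing R] [IsLocalRing R] {I J : Ideal R}

theorem isReduction_of_pow_succ_le [IsNoetherianRing R] (hJI : J ≤ I) {n : ℕ}
    (h : I ^ (n + 1) ≤ J * I ^ n ⊔ maximalIdeal R * I ^ (n + 1)) : IsReduction J I :=
  ⟨hJI, n, le_antisymm
    (Submodule.le_of_le_smul_of_le_jacobson_bot (IsNoetherian.noetherian _)
      (maximalIdeal_le_jacobson _) h)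
    (pow_succ' I n ▸ Ideal.mul_mono_left hJI)⟩

theorem exists_pow_forall_exists_mul_mem_of_mem_minimalPrimes {A : Type*} [CommRing A]
    [IsNoetherianRing A] {K P : Ideal A} (hP : P ∈ K.minimalPrimes) :
    ∃ n : ℕ, ∀ f ∈ P ^ n, ∃ g ∉ P, g * f ∈ K := by
  have := hP.isPrime
  let B := Localization.AtPrime P
  obtain ⟨n, hn⟩ := Ideal.exists_radical_pow_le_of_fg (K.map (algebraMap A B))
    (IsNoetherian.noetherian _)
  rw [IsLocalization.AtPrime.radical_map_of_mem_minimalPrimes B P K hP, ← Ideal.map_pow] at hn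
  exact ⟨n, fun f hf ↦ (IsLocalization.algebraMap_mem_map_algebraMap_iff P.primeCompl B K f).mp
    (hn (Ideal.mem_map_of_mem _ hf))⟩

theorem IsReduction.irrelevantIdeal_le (h : IsReduction J I) {P : Ideal (reesAlgebra I)}
    (hP : P.IsPrime) (hJP : fiberExtension I J ≤ P) : irrelevantIdeal I ≤ P := by
  obtain ⟨hJI, n, hn⟩ := h
  obtain ⟨hm, hJ⟩ := (fiberExtension_le_iff hJI).mp hJP
  refine irrelevantIdeal_le_of_le_degreePart_one hm fun x hx ↦
    mem_degreePart_one_of_pow_mem hP hx (n := 1 + n) ?_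
  have hxn : x ^ (1 + n) ∈ J * I ^ n := hn ▸ add_comm n 1 ▸ Ideal.pow_mem_pow hx (1 + n)
  exact degreePart_mul_pow_le P 1 n (Ideal.mul_mono_left hJ hxn)

theorem isReduction_iff_irrelevantIdeal_mem_minimalPrimes [IsNoetherianRing R] (hJI : J ≤ I) :
    IsReduction J I ↔ irrelevantIdeal I ∈ (fiberExtension I J).minimalPrimes := by
  refine ⟨fun h ↦ ⟨⟨inferInstance, fiberExtension_le_irrelevantIdeal hJI⟩,
    fun P hP _ ↦ h.irrelevantIdeal_le hP.1 hP.2⟩, fun h ↦ ?_⟩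
  obtain ⟨n, hn⟩ := exists_pow_forall_exists_mul_mem_of_mem_minimalPrimes h
  refine isReduction_of_pow_succ_le hJI (n := n) fun x hx ↦ ?_
  have hxM := pow_degreePart_one_le (irrelevantIdeal I) (n + 1)
    (Ideal.pow_right_mono (le_degreePart_irrelevantIdeal_one I) (n + 1) hx)
  rw [mem_degreePart_iff hx] at hxM
  obtain ⟨g, hg, hgx⟩ := hn _ (Ideal.pow_le_pow_right n.le_succ hxM)
  have hg0 : IsUnit ((g : R[X]).coeff 0) := by
    rwa [mem_irrelevantIdeal, mem_maximalIdeal, mem_nonunits_iff, not_not] at hg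
  have hcoeff : (g : R[X]).coeff 0 * x ∈ J * I ^ n ⊔ maximalIdeal R * I ^ (n + 1) := by
    rw [← coeff_mul_monomial (g : R[X]) (n + 1) 0 x, zero_add]
    exact coeff_succ_mem_of_mem_fiberExtension hgx n
  exact (Ideal.unit_mul_mem_iff_mem _ hg0).mp hcoeff

end Reduction

section Exchange

variable {A : Type*} [CommRing A] [IsNoetherianRing A]

theorem mem_minimalPrimes_of_lt_of_mem_minimalPrimes_sup_span_singleton {K P M : Ideal A} {u : A}
    (hM : M ∈ (K ⊔ Ideal.span {u}).minimalPrimes) (hP : P.IsPrime) (hKP : K ≤ P) (hPM : P < M) :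
    P ∈ K.minimalPrimes := by
  rw [← K.span_eq]
  refine Ideal.mem_minimalPrimes_span_of_mem_minimalPrimes_span_insert hPM u K ?_ K hKP ?_
  · rwa [Ideal.span_insert, sup_comm, K.span_eq]
  · exact (Set.subset_insert u K).trans (Ideal.subset_span.trans Ideal.le_radical)

theorem mem_minimalPrimes_sup_span_singleton_iff {K M : Ideal A} {u v : A}
    (hM : M ∈ (K ⊔ Ideal.span {u}).minimalPrimes) (hv : v ∈ M) :
    M ∈ (K ⊔ Ideal.span {v}).minimalPrimes ↔ ∀ P ∈ K.minimalPrimes, P < M → v ∉ P := by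
  have le_iff (P : Ideal A) : K ⊔ Ideal.span {v} ≤ P ↔ K ≤ P ∧ v ∈ P := by
    rw [sup_le_iff, Ideal.span_singleton_le_iff_mem]
  constructor
  · intro h P hP hPM hvP
    exact hPM.not_ge (h.2 ⟨hP.isPrime, (le_iff P).mpr ⟨hP.le, hvP⟩⟩ hPM.le)
  · intro h
    refine ⟨⟨hM.isPrime, (le_iff M).mpr ⟨le_sup_left.trans hM.le, hv⟩⟩, fun P hP hPM ↦ ?_⟩
    obtain ⟨hKP, hvP⟩ := (le_iff P).mp hP.2
    by_contra hMP
    have hlt : P < M := lt_of_le_not_ge hPM hMP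
    exact h P (mem_minimalPrimes_of_lt_of_mem_minimalPrimes_sup_span_singleton hM hP.1 hKP hlt)
      hlt hvP

end Exchange

section AnalyticSpread

theorem ringKrullDim_le_of_isIntegral (A B : Type*) [CommRing A] [CommRing B] [Algebra A B]
    [Algebra.IsIntegral A B] : ringKrullDim B ≤ ringKrullDim A :=
  Order.krullDim_le_of_strictMono (PrimeSpectrum.comap (algebraMap A B)) fun p q hpq ↦
    Ideal.IsIntegral.comap_lt_comap (I := p.asIdeal) (J := q.asIdeal) hpq

theorem ringKrullDim_quotient_map_le_of_isIntegral {A : Type*} (B : Type*) [CommRing A]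
    [CommRing B] [Algebra A B] [Algebra.IsIntegral A B] (I : Ideal A) :
    ringKrullDim (B ⧸ I.map (algebraMap A B)) ≤ ringKrullDim (A ⧸ I) := by
  have : Algebra.IsIntegral (A ⧸ I) (B ⧸ I.map (algebraMap A B)) :=
    Algebra.IsIntegral.tower_top A
  exact ringKrullDim_le_of_isIntegral _ _

theorem ringKrullDim_mvPolynomial_quotient_map_C {R : Type*} [CommRing R] (σ : Type*) [Finite σ]
    (m : Ideal R) [m.IsMaximal] :
    ringKrullDim (MvPolynomial σ R ⧸ m.map (MvPolynomial.C (σ := σ))) = Nat.card σ := by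
  have hfield : IsField (R ⧸ m) := (Ideal.Quotient.maximal_ideal_iff_isField_quotient m).mp ‹_›
  let := Ideal.Quotient.field m
  rw [← ringKrullDim_eq_of_ringEquiv
      (MvPolynomial.quotientEquivQuotientMvPolynomial (σ := σ) m).toRingEquiv,
    MvPolynomial.ringKrullDim_of_isNoetherianRing, ringKrullDim_eq_zero_of_isField hfield, zero_add]

variable {R : Type*} [CommRing R] {I J : Ideal R}

theorem IsReduction.exists_forall_pow_succ_eq (h : IsReduction J I) :
    ∃ n, ∀ k ≥ n, I ^ (k + 1) = J * I ^ k := by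
  obtain ⟨-, n, hn⟩ := h
  refine ⟨n, fun k hk ↦ ?_⟩
  obtain ⟨i, rfl⟩ := Nat.exists_eq_add_of_le hk
  rw [add_right_comm, pow_add, hn, mul_assoc, ← pow_add]

variable [IsNoetherianRing R]

theorem fg_comap_degreeLT_reesAlgebra (I : Ideal R) (n : ℕ) :
    ((degreeLT R n).comap (reesAlgebra I).val.toLinearMap).FG := by
  have : IsNoetherian R (degreeLT R n) := isNoetherian_of_linearEquiv (degreeLTEquiv R n).symm
  refine Submodule.fg_of_fg_map_injective (reesAlgebra I).val.toLinearMap Subtype.val_injective ?_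
  exact (isNoetherian_submodule.mp this) _ (Submodule.map_comap_le _ _)

/-- Once `Jt` comes from `A`, the identities `I ^ (k + 1) = J * I ^ k` for `k ≥ n` let the elements
of degree at most `n` generate `R[It]` over `A`. -/
theorem IsReduction.finite_reesAlgebra (h : IsReduction J I) {A : Type*} [CommRing A] [Algebra R A]
    [Algebra A (reesAlgebra I)] [IsScalarTower R A (reesAlgebra I)]
    (hJA : J ≤ degreePart (IsScalarTower.toAlgHom R A (reesAlgebra I)).range.toSubmodule 1) :
    Module.Finite A (reesAlgebra I) := by
  obtain ⟨n, hn⟩ := h.exists_forall_pow_succ_eq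
  let L := (degreeLT R (n + 1)).comap (reesAlgebra I).val.toLinearMap
  let W := Submodule.span A (L : Set (reesAlgebra I))
  have hWfg : W.FG := by
    obtain ⟨t, ht⟩ := fg_comap_degreeLT_reesAlgebra I (n + 1)
    refine ⟨t, ?_⟩
    rw [← Submodule.span_span_of_tower R, ht]
  have hmul : (IsScalarTower.toAlgHom R A (reesAlgebra I)).range.toSubmodule *
      W.restrictScalars R ≤ W.restrictScalars R := by
    rw [Submodule.mul_le]
    rintro _ ⟨p, rfl⟩ w hw
    have := W.smul_mem p hw
    rwa [Algebra.smul_def] at this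
  have hlow (j : ℕ) (hj : j ≤ n) : I ^ j ≤ degreePart (W.restrictScalars R) j := fun x hx ↦ by
    rw [mem_degreePart_iff hx]
    exact Submodule.subset_span (monomial_coe_mem_degreeLT ⟨j, Nat.lt_succ_of_le hj⟩ x)
  have hhigh (j : ℕ) (hj : n ≤ j) : I ^ j ≤ degreePart (W.restrictScalars R) j := by
    induction j, hj using Nat.le_induction with
    | base => exact hlow n le_rfl
    | succ j hj ih =>
      rw [hn j hj, add_comm]
      exact (Ideal.mul_mono hJA ih).trans
        ((degreePart_mul_degreePart_le _ _ 1 j).trans (degreePart_mono hmul _))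
  have hW : W = ⊤ := Submodule.eq_top_iff'.mpr fun f ↦
    mem_of_forall_coeff_mem_degreePart (N := W.restrictScalars R) fun j ↦
      (le_total j n).elim (hlow j · (f.2 j)) (hhigh j · (f.2 j))
  exact ⟨hW ▸ hWfg⟩

theorem IsReduction.analyticSpread_le [IsLocalRing R] (h : IsReduction J I) :
    analyticSpread R I ≤ J.spanFinrank := by
  obtain ⟨t, ht, hJ⟩ := (IsNoetherian.noetherian J).exists_span_finset_card_eq_spanFinrank
  have htI (y : t) : (y : R) ∈ I := h.1 (hJ ▸ Submodule.subset_span y.2)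
  let φ : MvPolynomial t R →ₐ[R] reesAlgebra I := MvPolynomial.aeval fun y ↦
    ⟨monomial 1 (y : R), reesAlgebra.monomial_mem.mpr (by simpa using htI y)⟩
  algebraize [φ.toRingHom]
  have : IsScalarTower R (MvPolynomial t R) (reesAlgebra I) :=
    .of_algebraMap_eq' φ.comp_algebraMap.symm
  have hJφ : J ≤ degreePart
      (IsScalarTower.toAlgHom R (MvPolynomial t R) (reesAlgebra I)).range.toSubmodule 1 := by
    rw [← hJ]
    refine Submodule.span_le.mpr fun y hy ↦ ?_
    exact mem_degreePart.mpr ⟨_, ⟨.X ⟨y, hy⟩, rfl⟩, congrArg Subtype.val (MvPolynomial.aeval_X _ _)⟩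
  have := h.finite_reesAlgebra hJφ
  have hmap : (maximalIdeal R).map (algebraMap R (reesAlgebra I)) =
      ((maximalIdeal R).map MvPolynomial.C).map
        (algebraMap (MvPolynomial t R) (reesAlgebra I)) := by
    rw [Ideal.map_map, ← MvPolynomial.algebraMap_eq, ← IsScalarTower.algebraMap_eq]
  calc analyticSpread R I
      = ringKrullDim (reesAlgebra I ⧸ ((maximalIdeal R).map (MvPolynomial.C (σ := t))).map
          (algebraMap (MvPolynomial t R) (reesAlgebra I))) := by rw [← hmap]; rfl
    _ ≤ ringKrullDim (MvPolynomial t R ⧸ (maximalIdeal R).map (MvPolynomial.C (σ := t))) :=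
        ringKrullDim_quotient_map_le_of_isIntegral _ _
    _ = J.spanFinrank := by
        rw [ringKrullDim_mvPolynomial_quotient_map_C, Nat.card_eq_fintype_card,
          Fintype.card_coe, ht]

end AnalyticSpread

section LocalModule

theorem exists_finset_le_span_sup_ker {k V : Type*} [DivisionRing k] [AddCommGroup V] [Module k V]
    {R M : Type*} [Ring R] [AddCommGroup M] [Module R M] [Module.Finite R M] {σ : R →+* k}
    [RingHomSurjective σ] {f : M →ₛₗ[σ] V} (hf : Function.Surjective f) {N : Submodule R M}
    (hN : N.map f ≠ ⊤) :
    ∃ t : Finset M, (t : Set M) ⊆ N ∧ t.card < (⊤ : Submodule R M).spanFinrank ∧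
      N ≤ Submodule.span R t ⊔ f.ker := by
  classical
  have htop : (⊤ : Submodule R M).map f = ⊤ := by
    rw [Submodule.map_top, LinearMap.range_eq_top.mpr hf]
  have : Module.Finite k V := ⟨htop ▸ Module.Finite.fg_top.map f⟩
  obtain ⟨s, hs, hspan⟩ :=
    (IsNoetherian.noetherian (N.map f)).exists_span_finset_card_eq_spanFinrank
  have hsN : Set.SurjOn f N s := fun v hv ↦ by
    rw [← Submodule.map_coe, ← hspan]
    exact Submodule.subset_span hv
  obtain ⟨t, htN, htinj, hts⟩ := Finset.exists_subset_injOn_image_eq_of_surjOn _ _ hsN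
  refine ⟨t, htN, ?_, ?_⟩
  · calc t.card = (N.map f).spanFinrank := by rw [← hs, ← hts, Finset.card_image_of_injOn htinj]
      _ < (⊤ : Submodule k V).spanFinrank := by
        rw [← Module.finrank_eq_spanFinrank_of_free, ← Submodule.spanFinrank_top,
          ← Module.finrank_eq_spanFinrank_of_free]
        exact Submodule.finrank_lt hN
      _ ≤ (⊤ : Submodule R M).spanFinrank := by
        rw [← htop]
        exact Submodule.spanFinrank_map_le_of_fg f Module.Finite.fg_top
  · rw [← Submodule.comap_map_eq, Submodule.map_span, ← Finset.coe_image, hts, hspan]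
    exact Submodule.le_comap_map f N

theorem infinite_of_nontrivial_module_of_infinite_residueField (R : Type*) [CommRing R]
    [IsLocalRing R] [Infinite (ResidueField R)] (M : Type*) [AddCommGroup M] [Module R M]
    [Nontrivial M] : Infinite M := by
  by_contra hM
  rw [not_infinite_iff_finite] at hM
  obtain ⟨y, hy⟩ := exists_ne (0 : M)
  let f := LinearMap.toSpanSingleton R M y
  have hker : f.ker ≤ maximalIdeal R := le_maximalIdeal <| by
    rw [Ne, Ideal.eq_top_iff_one, LinearMap.mem_ker]
    simpa [f] using hy
  have : Finite (R ⧸ f.ker) := .of_equiv _ f.quotKerEquivRange.symm.toEquiv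
  have : Finite (ResidueField R) := .of_surjective _ (Ideal.Quotient.factor_surjective hker)
  exact Infinite.not_finite this

variable {R : Type*} [CommRing R] [IsLocalRing R] {M : Type*} [AddCommGroup M] [Module R M]

theorem iUnion_ne_univ_of_infinite_residueField [Infinite (ResidueField R)] {ι : Type*} [Finite ι]
    {p : ι → Submodule R M} (hp : ∀ i, p i ≠ ⊤) : ⋃ i, (p i : Set M) ≠ Set.univ := by
  intro hcover
  have := Fintype.ofFinite ι
  obtain ⟨i, -, hi⟩ := Submodule.exists_finiteIndex_of_cover (p := p) (s := Finset.univ)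
    (by simpa using hcover)
  have hfin : Finite (M ⧸ p i) := AddSubgroup.finite_quotient_of_finiteIndex
  have : Nontrivial (M ⧸ p i) := Submodule.Quotient.nontrivial_iff.mpr (hp i)
  exact (infinite_of_nontrivial_module_of_infinite_residueField R (M ⧸ p i)).not_finite hfin

theorem iUnion_ssubset_of_forall_lt [Infinite (ResidueField R)] {ι : Type*} [Finite ι]
    {p : ι → Submodule R M} {N : Submodule R M} (hp : ∀ i, p i < N) :
    ⋃ i, (p i : Set M) ⊂ (N : Set M) := by
  refine ssubset_of_subset_not_subset (Set.iUnion_subset fun i ↦ (hp i).le) fun hN ↦ ?_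
  refine iUnion_ne_univ_of_infinite_residueField (p := fun i ↦ (p i).comap N.subtype)
    (fun i hi ↦ (hp i).not_ge (Submodule.comap_subtype_eq_top.mp hi)) ?_
  refine Set.eq_univ_of_forall fun x ↦ ?_
  simpa using hN x.2

theorem exists_finset_le_span_sup_maximalIdeal_smul {N N' : Submodule R M} (hN : N.FG)
    (h : N' < N) :
    ∃ t : Finset M, (t : Set M) ⊆ N' ∧ t.card < N.spanFinrank ∧
      N' ≤ Submodule.span R t ⊔ maximalIdeal R • N := by
  classical
  let : Field (R ⧸ maximalIdeal R) := Ideal.Quotient.field _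
  have : Module.Finite R N := .of_fg hN
  let m : Submodule R N := maximalIdeal R • ⊤
  let f : N →ₛₗ[Ideal.Quotient.mk (maximalIdeal R)] N ⧸ m :=
    { m.mkQ with map_smul' := fun _ _ ↦ rfl }
  have hker : f.ker = m := m.ker_mkQ
  have hmap : (N'.comap N.subtype).map f ≠ ⊤ := fun htop ↦ h.not_ge <| by
    rw [← Submodule.comap_subtype_eq_top]
    refine top_le_iff.mp (Submodule.le_of_le_smul_of_le_jacobson_bot Module.Finite.fg_top
      (maximalIdeal_le_jacobson _) ?_)
    change ⊤ ≤ N'.comap N.subtype ⊔ m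
    rw [← hker, ← Submodule.comap_map_eq, htop, Submodule.comap_top]
  obtain ⟨t, htN, ht, hle⟩ := exists_finset_le_span_sup_ker m.mkQ_surjective hmap
  refine ⟨t.image N.subtype, ?_, ?_, ?_⟩
  · simpa [Set.subset_def] using htN
  · rw [← Submodule.spanFinrank_top]
    exact Finset.card_image_le.trans_lt ht
  · have := Submodule.map_mono (f := N.subtype) hle
    rw [hker, Submodule.map_sup, Submodule.map_span, Submodule.map_smul'', Submodule.map_top,
      Submodule.range_subtype, Submodule.map_comap_subtype, inf_eq_right.mpr h.le] at this
    rwa [Finset.coe_image]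

end LocalModule

section Minimality

variable {R : Type*} [CommRing R] [IsLocalRing R] [IsNoetherianRing R] {I J : Ideal R}

theorem IsReduction.of_le_sup_maximalIdeal_mul {J' : Ideal R} (hJ : IsReduction J I) (hJ' : J' ≤ I)
    (h : J ≤ J' ⊔ maximalIdeal R * I) : IsReduction J' I := by
  obtain ⟨n, hn⟩ := hJ.2
  refine isReduction_of_pow_succ_le hJ' (n := n) ?_
  calc I ^ (n + 1) = J * I ^ n := hn
    _ ≤ (J' ⊔ maximalIdeal R * I) * I ^ n := Ideal.mul_mono_left h
    _ = J' * I ^ n ⊔ maximalIdeal R * I ^ (n + 1) := by rw [Ideal.sup_mul, mul_assoc, pow_succ']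

theorem IsReduction.isMinimalReduction (h : IsReduction J I)
    (hJ : (J.spanFinrank : WithBot ℕ∞) ≤ analyticSpread R I) : IsMinimalReduction J I := by
  refine ⟨h, fun J' hJ' hle ↦ by_contra fun hne ↦ ?_⟩
  obtain ⟨t, htJ', ht, hJ't⟩ := exists_finset_le_span_sup_maximalIdeal_smul
    (IsNoetherian.noetherian J) (lt_of_le_of_ne hle hne)
  have hred : IsReduction (Ideal.span (t : Set R)) I :=
    hJ'.of_le_sup_maximalIdeal_mul ((Ideal.span_le.mpr htJ').trans hJ'.1)
      (hJ't.trans (sup_le_sup_left (Ideal.mul_mono_right h.1) _))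
  have hlt : (Ideal.span (t : Set R)).spanFinrank < J.spanFinrank :=
    (Submodule.spanFinrank_span_le_ncard_of_finite t.finite_toSet).trans_lt
      (by rwa [Set.ncard_coe_finset])
  have hle : J.spanFinrank ≤ (Ideal.span (t : Set R)).spanFinrank := by
    exact_mod_cast hJ.trans hred.analyticSpread_le
  exact hlt.not_ge hle

end Minimality

section GenericExchange

theorem range_eq_insert_image_of_pos {α : Type*} {d : ℕ} (hd : 0 < d) (a : Fin d → α) :
    Set.range a = insert (a ⟨d - 1, Nat.sub_one_lt_of_lt hd⟩) (a '' {i | (i : ℕ) + 1 < d}) := by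
  rw [← Set.image_univ, ← Set.image_insert_eq]
  congr 1
  ext i
  simp only [Set.mem_univ, Set.mem_insert_iff, Fin.ext_iff, Set.mem_ofPred_eq, true_iff]
  omega

theorem encard_image_add_one_le_of_pos {α : Type*} {d : ℕ} (hd : 0 < d) (a : Fin d → α) :
    (a '' {i | (i : ℕ) + 1 < d}).encard + 1 ≤ d := by
  have hlast : (⟨d - 1, Nat.sub_one_lt_of_lt hd⟩ : Fin d) ∉ {i : Fin d | (i : ℕ) + 1 < d} := by
    simp only [Set.mem_ofPred_eq]
    omega
  grw [Set.encard_image_le, ← Set.encard_insert_of_notMem hlast, Set.encard_le_encard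
    (Set.subset_univ _)]
  simp

variable {R : Type*} [CommRing R] [IsLocalRing R] {I : Ideal R}

theorem maximalIdeal_mul_le_degreePart_one {J : Ideal R} (hJI : J ≤ I) {P : Ideal (reesAlgebra I)}
    (hP : (maximalIdeal R).map (algebraMap R (reesAlgebra I)) ≤ P) :
    maximalIdeal R * J ≤ degreePart (P.restrictScalars R) 1 := by
  have h0 : maximalIdeal R ≤ degreePart (P.restrictScalars R) 0 := fun r hr ↦
    ⟨_, hP (Ideal.mem_map_of_mem _ hr), rfl⟩
  calc maximalIdeal R * J ≤ degreePart (P.restrictScalars R) 0 * I ^ 1 :=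
        Ideal.mul_mono h0 (by rwa [pow_one])
    _ ≤ degreePart (P.restrictScalars R) 1 := degreePart_mul_pow_le P 0 1

theorem IsReduction.not_le_degreePart_one {J : Ideal R} (h : IsReduction J I)
    {P : Ideal (reesAlgebra I)} (hP : P.IsPrime)
    (hm : (maximalIdeal R).map (algebraMap R (reesAlgebra I)) ≤ P) (hPM : P < irrelevantIdeal I) :
    ¬ J ≤ degreePart (P.restrictScalars R) 1 := fun hJ ↦
  hPM.not_ge (h.irrelevantIdeal_le hP ((fiberExtension_le_iff h.1).mpr ⟨hm, hJ⟩))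

variable [IsNoetherianRing R] {s : Set R} {c x : R}

theorem isReduction_span_insert_iff (hc : IsReduction (Ideal.span (insert c s)) I) (hx : x ∈ I) :
    IsReduction (Ideal.span (insert x s)) I ↔
      ∀ P ∈ (fiberExtension I (Ideal.span s)).minimalPrimes, P < irrelevantIdeal I →
        x ∉ degreePart (P.restrictScalars R) 1 := by
  have hsub : insert c s ⊆ I := Ideal.span_le.mp hc.1
  have hsI : s ⊆ I := (Set.subset_insert c s).trans hsub
  have hxI : x ∈ I ^ 1 := by rwa [pow_one]
  have hs : Ideal.span s ≤ I := Ideal.span_le.mpr hsI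
  rw [isReduction_iff_irrelevantIdeal_mem_minimalPrimes hc.1,
    fiberExtension_span_insert hs (hsub (Set.mem_insert c s))] at hc
  rw [isReduction_iff_irrelevantIdeal_mem_minimalPrimes
      (Ideal.span_le.mpr (Set.insert_subset hx hsI)), fiberExtension_span_insert hs hx,
    mem_minimalPrimes_sup_span_singleton_iff hc
      ((mem_degreePart_iff hxI).mp (le_degreePart_irrelevantIdeal_one I hx))]
  simp only [mem_degreePart_iff hxI, Submodule.restrictScalars_mem]

theorem isMinimalReduction_span_insert_iff
    (hs : ((s.encard + 1 : ℕ∞) : WithBot ℕ∞) ≤ analyticSpread R I) :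
    IsMinimalReduction (Ideal.span (insert x s)) I ↔ IsReduction (Ideal.span (insert x s)) I := by
  refine ⟨And.left, fun h ↦ h.isMinimalReduction (le_trans ?_ hs)⟩
  exact WithBot.coe_le_coe.mpr
    ((Submodule.spanFinrank_span_le_encard _).trans (Set.encard_insert_le s x))

theorem generic_exchange_minimal_reductions_general [Infinite (ResidueField R)]
    (hs : ((s.encard + 1 : ℕ∞) : WithBot ℕ∞) ≤ analyticSpread R I)
    (hc : IsReduction (Ideal.span (insert c s)) I) {𝔟 : Ideal R} (h𝔟 : IsReduction 𝔟 I) :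
    ∃ (r : ℕ) (J : Fin r → Ideal R),
      (∀ i, maximalIdeal R * 𝔟 ≤ J i ∧ J i ≤ 𝔟) ∧
      (⋃ i, (J i : Set R)) ⊂ (𝔟 : Set R) ∧
      ∀ x ∈ 𝔟, IsMinimalReduction (Ideal.span (insert x s)) I ↔ x ∉ ⋃ i, (J i : Set R) := by
  let 𝒬 := {P ∈ (fiberExtension I (Ideal.span s)).minimalPrimes | P < irrelevantIdeal I}
  have : Finite 𝒬 :=
    (Ideal.finite_minimalPrimes_of_isNoetherianRing _ _).subset (Set.sep_subset _ _)
  obtain ⟨r, ⟨e⟩⟩ := Finite.exists_equiv_fin 𝒬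
  let J (P : 𝒬) : Ideal R := 𝔟 ⊓ degreePart (P.1.restrictScalars R) 1
  have hm (P : 𝒬) : (maximalIdeal R).map (algebraMap R (reesAlgebra I)) ≤ P :=
    le_sup_left.trans P.2.1.le
  have hmul (P : 𝒬) : maximalIdeal R * 𝔟 ≤ J P :=
    le_inf Ideal.mul_le_right (maximalIdeal_mul_le_degreePart_one h𝔟.1 (hm P))
  have hlt (P : 𝒬) : J P < 𝔟 :=
    inf_lt_left.mpr (h𝔟.not_le_degreePart_one P.2.1.isPrime (hm P) P.2.2)
  refine ⟨r, fun i ↦ J (e.symm i), fun i ↦ ⟨hmul _, inf_le_left⟩,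
    iUnion_ssubset_of_forall_lt fun i ↦ hlt _, fun x hx ↦ ?_⟩
  rw [isMinimalReduction_span_insert_iff hs, isReduction_span_insert_iff hc (h𝔟.1 hx),
    e.symm.surjective.iUnion_comp (fun P ↦ (J P : Set R))]
  simp [J, 𝒬, hx]

end GenericExchange

/-- Generic exchange for minimal reductions: given minimal reductions
`𝔞 = (a₁,…,a_d)` and `𝔟 = (b₁,…,b_d)` of `I` (`d = ℓ(I) > 0`), there are
finitely many ideals `Jᵢ` with `𝔪𝔟 ⊆ Jᵢ ⊆ 𝔟` whose union is a proper subset of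
`𝔟`, such that for `b ∈ 𝔟`, `(a₁,…,a_{d-1},b)` is a minimal reduction of `I`
iff `b ∉ ⋃ Jᵢ`. -/
theorem generic_exchange_minimal_reductions (R : Type*) [CommRing R]
    [IsNoetherianRing R] [IsLocalRing R] [Infinite (IsLocalRing.ResidueField R)]
    (I : Ideal R) (hI : I ≠ ⊤) (d : ℕ) (hd : 0 < d)
    (hspread : analyticSpread R I = d)
    (a b : Fin d → R)
    (ha : IsMinimalReduction (Ideal.span (Set.range a)) I)
    (hb : IsMinimalReduction (Ideal.span (Set.range b)) I) :
    ∃ (r : ℕ) (J : Fin r → Ideal R),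
      (∀ i, IsLocalRing.maximalIdeal R * Ideal.span (Set.range b) ≤ J i ∧
        J i ≤ Ideal.span (Set.range b)) ∧
      (⋃ i, (J i : Set R)) ⊂ (Ideal.span (Set.range b) : Set R) ∧
      ∀ x ∈ Ideal.span (Set.range b),
        (IsMinimalReduction
            (Ideal.span (insert x (a '' {i : Fin d | (i : ℕ) + 1 < d}))) I
          ↔ x ∉ ⋃ i, (J i : Set R)) := by
  refine generic_exchange_minimal_reductions_general (c := a ⟨d - 1, Nat.sub_one_lt_of_lt hd⟩) ?_
    (range_eq_insert_image_of_pos hd a ▸ ha.1) hb.1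
  exact hspread ▸ WithBot.coe_le_coe.mpr (encard_image_add_one_le_of_pos hd a)
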